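/- For fixed β ∈ (0,2), t₁, t₂ ∈ (0,∞) and every s ∈ [0, min(t₁,t₂)], the quantity Ψ_R(t₁,t₂;s) = R^{β−4} ∫_{ℝ²×ℝ²} φ_{t₁,R}(s,y) φ_{t₂,R}(s,z) ‖y−z‖^{−β} dy dz converges, as R → ∞, to 4π² c_β κ_β (t₁−s)(t₂−s). -/

import Mathlib

/-!
After the change of variables `y ↦ R y`, `z ↦ R z` the prefactor `R ^ (β - 4)` disappears and
`Ψ_R` becomes `∫∫ φ_{t₁,R}(s, R y) φ_{t₂,R}(s, R z) ‖y - z‖ ^ (-β) dy dz`. Since `G_T` has total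
mass `T` (`integral_G`) and is supported in the ball of radius `T`, the rescaled `φ_{t,R}(s, R ·)` is
bounded by `t - s`, supported in a fixed ball, and for `‖y‖ ≠ 1` eventually equal to
`(t - s) 1_{B_1}(y)`. As `‖x‖ ^ (-β)` is locally integrable in the plane for `β < 2`, dominated
convergence (`tendsto_Psi`) gives the limit
`(t₁ - s) (t₂ - s) ∫∫_{B_1 × B_1} ‖y - z‖ ^ (-β) dy dz`.

The remaining Riesz energy of the disk is evaluated on the Fourier side (`energy_eq`). The kernel is
a mixture of Gaussians, `‖x‖ ^ (-β) = Γ(β/2)⁻¹ ∫₀^∞ u ^ (β/2 - 1) exp (-u ‖x‖²) du`; for each Gaussian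
the double integral over the disk is a weighted integral of the squared Fourier transform of the
disk (`lintegral_gaussian_disk`); integrating over `u` by Tonelli turns the weight into
`c_β ‖ξ‖ ^ (β - 2)` (`weight_integral`). Finally, by rotation invariance and slicing, the Fourier
transform of the disk at `ξ` is `2π J₁(‖ξ‖) / ‖ξ‖` (`diskFT_eq`), which yields `4π² c_β κ_β`.
-/

open MeasureTheory Real

noncomputable section

/-- `ℝ²` with the Euclidean norm. -/
abbrev E2 : Type := EuclideanSpace ℝ (Fin 2)

/-- The fundamental solution of the 2D wave equation. -/
def G (t : ℝ) (x : E2) : ℝ :=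
  if ‖x‖ < t then (2 * π * Real.sqrt (t ^ 2 - ‖x‖ ^ 2))⁻¹ else 0

/-- `φ_{t,R}(s,y) = ∫_{B_R} G_{t-s}(x-y) dx`. -/
def phi (t R s : ℝ) (y : E2) : ℝ :=
  ∫ x in Metric.closedBall (0 : E2) R, G (t - s) (x - y)

/-- `Ψ_R(t₁,t₂;s) = R^{β-4} ∫∫ φ_{t₁,R}(s,y) φ_{t₂,R}(s,z) ‖y-z‖^{-β} dy dz`. -/
def Psi (β t₁ t₂ R s : ℝ) : ℝ :=
  R ^ (β - 4) * ∫ y : E2, ∫ z : E2, phi t₁ R s y * phi t₂ R s z * ‖y - z‖ ^ (-β)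

/-- The Bessel function of the first kind of order one:
`J₁(x) = (x/π) ∫₀^π sin²θ cos(x cos θ) dθ`. -/
def J1 (x : ℝ) : ℝ :=
  x / π * ∫ θ in (0:ℝ)..π, Real.sin θ ^ 2 * Real.cos (x * Real.cos θ)

/-- `c_β = Γ(1-β/2)/(π 4^{β/2} Γ(β/2))`. -/
def cBeta (β : ℝ) : ℝ :=
  Real.Gamma (1 - β / 2) / (π * (4 : ℝ) ^ (β / 2) * Real.Gamma (β / 2))

/-- `κ_β = ∫_{ℝ²} ‖ξ‖^{β-4} J₁(‖ξ‖)² dξ`. -/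
def kappaBeta (β : ℝ) : ℝ :=
  ∫ ξ : E2, ‖ξ‖ ^ (β - 4) * (J1 ‖ξ‖) ^ 2

/-! ### Wave kernel and Riesz kernel -/

/-- The radial integral behind `∫ G_T = T`: the primitive is `-√(T² - r²) / (2π)`, and integrability
at the singular endpoint follows from nonnegativity. -/
lemma integral_radial {T : ℝ} (hT : 0 < T) :
    IntegrableOn (fun r : ℝ => r * (2 * π * √(T ^ 2 - r ^ 2))⁻¹) (Set.Ioc 0 T) ∧
      ∫ r in Set.Ioc 0 T, r * (2 * π * √(T ^ 2 - r ^ 2))⁻¹ = T / (2 * π) := by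
  have hcont : ContinuousOn (fun r : ℝ => -√(T ^ 2 - r ^ 2) / (2 * π)) (Set.Icc 0 T) := by
    fun_prop
  have hder : ∀ r ∈ Set.Ioo 0 T, HasDerivAt (fun r : ℝ => -√(T ^ 2 - r ^ 2) / (2 * π))
      (r * (2 * π * √(T ^ 2 - r ^ 2))⁻¹) r := by
    rintro r ⟨h0, h1⟩
    have hp : 0 < T ^ 2 - r ^ 2 := by nlinarith
    have h := (((((hasDerivAt_id r).pow 2).const_sub (T ^ 2)).sqrt hp.ne').neg).div_const (2 * π)
    refine h.congr_deriv ?_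
    have : √(T ^ 2 - r ^ 2) ≠ 0 := (Real.sqrt_pos.2 hp).ne'
    simp
    field_simp
  have hint : IntegrableOn (fun r : ℝ => r * (2 * π * √(T ^ 2 - r ^ 2))⁻¹) (Set.Ioc 0 T) := by
    refine intervalIntegral.integrableOn_deriv_of_nonneg hcont hder ?_
    rintro r ⟨h0, -⟩
    positivity
  refine ⟨hint, ?_⟩
  rw [← intervalIntegral.integral_of_le hT.le,
    intervalIntegral.integral_eq_sub_of_hasDerivAt_of_le hT.le hcont hder
      ((intervalIntegrable_iff_integrableOn_Ioc_of_le hT.le).2 hint)]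
  simp [Real.sqrt_sq hT.le]
  ring

lemma G_nonneg (T : ℝ) (x : E2) : 0 ≤ G T x := by
  unfold G; split_ifs <;> positivity

lemma measurable_G (T : ℝ) : Measurable (G T) := by
  unfold G
  refine Measurable.ite ?_ (by fun_prop) (by fun_prop)
  exact measurableSet_lt (by fun_prop) (by fun_prop)

lemma G_eq_zero {T : ℝ} {x : E2} (h : T ≤ ‖x‖) : G T x = 0 := by
  simp [G, not_lt.2 h]

/-- The total mass of the wave kernel: `∫ G_T = T`. -/
lemma integral_G {T : ℝ} (hT : 0 ≤ T) : Integrable (G T) ∧ ∫ x, G T x = T := by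
  rcases hT.eq_or_lt with rfl | hT
  · have : G 0 = fun _ => 0 := by
      ext x; exact G_eq_zero (norm_nonneg x)
    simp [this]
  obtain ⟨hi, hv⟩ := integral_radial hT
  set f : ℝ → ℝ := fun r => if r < T then (2 * π * √(T ^ 2 - r ^ 2))⁻¹ else 0 with hf
  have hG : G T = fun x => f ‖x‖ := by ext x; simp [G, hf]
  have hfe : ∀ r ∈ Set.Ioi (0:ℝ), r ^ (Module.finrank ℝ E2 - 1) • f r =
      (Set.Ioc 0 T).indicator (fun r : ℝ => r * (2 * π * √(T ^ 2 - r ^ 2))⁻¹) r := by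
    intro r hr
    have hr : 0 < r := hr
    simp only [finrank_euclideanSpace, Fintype.card_fin, hf, Set.indicator, Set.mem_Ioc, hr,
      true_and, smul_eq_mul, Nat.add_one_sub_one, pow_one]
    rcases lt_trichotomy r T with h | h | h
    · simp [h, h.le]
    · simp [h]
    · simp [h.not_ge, h.not_gt]
  rw [hG]
  constructor
  · rw [integrable_fun_norm_addHaar, integrableOn_congr_fun hfe measurableSet_Ioi]
    exact ((integrable_indicator_iff measurableSet_Ioc).2 hi).integrableOn
  · rw [integral_fun_norm_addHaar, setIntegral_congr_fun measurableSet_Ioi hfe,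
      setIntegral_indicator measurableSet_Ioc,
      Set.inter_eq_self_of_subset_right Set.Ioc_subset_Ioi_self, hv]
    simp [Measure.real, ENNReal.toReal_ofReal Real.pi_pos.le]
    field_simp

/-- In dimension two the Riesz kernel is locally integrable for `β < 2`. -/
lemma integrableOn_kernel {β : ℝ} (hβ2 : β < 2) (r : ℝ) :
    IntegrableOn (fun x : E2 => ‖x‖ ^ (-β)) (Metric.ball 0 r) := by
  rw [integrableOn_fun_norm_addHaar (μ := volume) (f := fun y : ℝ => y ^ (-β))]
  have h : ∀ y ∈ Set.Ioo (0:ℝ) r, y ^ (Module.finrank ℝ E2 - 1) • y ^ (-β) = y ^ (1 - β) := by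
    intro y hy
    rw [show 1 - β = 1 + (-β) by ring, Real.rpow_add hy.1]
    simp
  rw [integrableOn_congr_fun h measurableSet_Ioo]
  rcases le_or_gt r 0 with hr | hr
  · simp [Set.Ioo_eq_empty_of_le hr]
  · rw [intervalIntegral.integrableOn_Ioo_rpow_iff hr]
    linarith

/-! ### Scaling limit -/

lemma integrable_G_sub {T : ℝ} (hT : 0 ≤ T) (y : E2) : Integrable (fun x => G T (x - y)) :=
  (integral_G hT).1.comp_sub_right y

lemma integral_G_sub {T : ℝ} (hT : 0 ≤ T) (y : E2) : ∫ x, G T (x - y) = T := by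
  rw [integral_sub_right_eq_self (G T) y, (integral_G hT).2]

lemma phi_nonneg (t R s : ℝ) (y : E2) : 0 ≤ phi t R s y :=
  integral_nonneg fun _ => G_nonneg _ _

lemma phi_le {t s : ℝ} (hst : s ≤ t) (R : ℝ) (y : E2) : phi t R s y ≤ t - s := by
  have hT : 0 ≤ t - s := sub_nonneg.2 hst
  calc phi t R s y ≤ ∫ x, G (t - s) (x - y) :=
        setIntegral_le_integral (integrable_G_sub hT y) (.of_forall fun _ => G_nonneg _ _)
    _ = t - s := integral_G_sub hT y

/-- Outside `B_{R + (t - s)}` the ball `B_R` misses the support of the translated kernel. -/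
lemma phi_eq_zero {t R s : ℝ} {y : E2} (h : R + (t - s) ≤ ‖y‖) : phi t R s y = 0 := by
  refine setIntegral_eq_zero_of_forall_eq_zero fun x hx => G_eq_zero ?_
  have h1 : ‖x‖ ≤ R := by simpa using hx
  have h2 := norm_sub_norm_le y x
  rw [norm_sub_rev] at h2
  linarith

/-- Inside `B_{R - (t - s)}` the ball `B_R` contains the support of the translated kernel. -/
lemma phi_eq_full {t R s : ℝ} (hst : s ≤ t) {y : E2} (h : ‖y‖ + (t - s) ≤ R) :
    phi t R s y = t - s := by
  have hT : 0 ≤ t - s := sub_nonneg.2 hst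
  rw [phi, setIntegral_eq_integral_of_forall_compl_eq_zero, integral_G_sub hT y]
  intro x hx
  have h1 : R < ‖x‖ := by simpa using hx
  have h2 := norm_sub_norm_le x y
  exact G_eq_zero (by linarith)

lemma measurable_phi (t R s : ℝ) : Measurable (phi t R s) := by
  have h : StronglyMeasurable (fun p : E2 × E2 => G (t - s) (p.2 - p.1)) :=
    ((measurable_G _).comp (by fun_prop)).stronglyMeasurable
  exact (h.integral_prod_right (ν := volume.restrict (Metric.closedBall 0 R))).measurable

/-- Rescaling both variables by `R` absorbs the prefactor `R ^ (β - 4)`. -/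
lemma Psi_eq_scaled (β t₁ t₂ s : ℝ) {R : ℝ} (hR : 0 < R) :
    Psi β t₁ t₂ R s =
      ∫ y : E2, ∫ z : E2, phi t₁ R s (R • y) * phi t₂ R s (R • z) * ‖y - z‖ ^ (-β) := by
  have h1 : ∀ y z : E2, phi t₁ R s (R • y) * phi t₂ R s (R • z) * ‖y - z‖ ^ (-β) =
      R ^ β * (phi t₁ R s (R • y) * phi t₂ R s (R • z) * ‖R • y - R • z‖ ^ (-β)) := by
    intro y z
    rw [← smul_sub, norm_smul, Real.norm_of_nonneg hR.le,
      Real.mul_rpow hR.le (norm_nonneg _), Real.rpow_neg hR.le]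
    have : R ^ β ≠ 0 := (Real.rpow_pos_of_pos hR β).ne'
    field_simp
  simp_rw [h1, integral_const_mul]
  have h2 : ∀ y : E2,
      ∫ z, phi t₁ R s (R • y) * phi t₂ R s (R • z) * ‖R • y - R • z‖ ^ (-β) =
      (R ^ 2)⁻¹ * ∫ z, phi t₁ R s (R • y) * phi t₂ R s z * ‖R • y - z‖ ^ (-β) := by
    intro y
    have := Measure.integral_comp_smul_of_nonneg (volume : Measure E2)
      (fun z => phi t₁ R s (R • y) * phi t₂ R s z * ‖R • y - z‖ ^ (-β)) R (hR := hR.le)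
    simpa using this
  simp_rw [h2, integral_const_mul]
  have h3 := Measure.integral_comp_smul_of_nonneg (volume : Measure E2)
      (fun y => ∫ z, phi t₁ R s y * phi t₂ R s z * ‖y - z‖ ^ (-β)) R (hR := hR.le)
  rw [h3, Psi, Real.rpow_sub hR]
  simp only [finrank_euclideanSpace, Fintype.card_fin, smul_eq_mul]
  rw [show R ^ (4:ℝ) = R ^ 2 * R ^ 2 by
    rw [show (4:ℝ) = ((4:ℕ):ℝ) by norm_num, Real.rpow_natCast]; ring]
  field_simp

/-- The rescaled profile stabilises pointwise, off the unit circle, to `(t - s) 1_{B_1}`. -/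
lemma tendsto_phi_scaled {t s : ℝ} (hst : s ≤ t) {y : E2} (hy : ‖y‖ ≠ 1) :
    Filter.Tendsto (fun R : ℝ => phi t R s (R • y)) Filter.atTop
      (nhds ((Metric.ball (0 : E2) 1).indicator (fun _ => t - s) y)) := by
  apply tendsto_const_nhds.congr'
  rcases hy.lt_or_gt with h | h
  · have h0 : 0 < 1 - ‖y‖ := by linarith
    filter_upwards [Filter.eventually_ge_atTop ((t - s) / (1 - ‖y‖)),
      Filter.eventually_gt_atTop 0] with R hR hR0
    rw [div_le_iff₀ h0] at hR
    rw [Set.indicator_of_mem (by simpa using h), phi_eq_full hst]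
    rw [norm_smul, Real.norm_of_nonneg hR0.le]
    linarith
  · have h0 : 0 < ‖y‖ - 1 := by linarith
    filter_upwards [Filter.eventually_ge_atTop ((t - s) / (‖y‖ - 1)),
      Filter.eventually_gt_atTop 0] with R hR hR0
    rw [div_le_iff₀ h0] at hR
    rw [Set.indicator_of_notMem (by simpa using h.le), phi_eq_zero]
    rw [norm_smul, Real.norm_of_nonneg hR0.le]
    linarith

lemma phi_scaled_eq_zero {t s R M : ℝ} (hst : s ≤ t) (hR : 1 ≤ R) (hM : 1 + (t - s) ≤ M)
    {y : E2} (hy : y ∉ Metric.ball (0 : E2) M) : phi t R s (R • y) = 0 := by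
  have hy : M ≤ ‖y‖ := by simpa using hy
  apply phi_eq_zero
  rw [norm_smul, Real.norm_of_nonneg (by linarith)]
  nlinarith

/-- The truncation to `B_{2M}` of the Riesz kernel `‖x‖ ^ (-β)`. -/
def cutKernel (β M : ℝ) : E2 → ℝ :=
  (Metric.ball (0 : E2) (2 * M)).indicator fun x => ‖x‖ ^ (-β)

lemma cutKernel_nonneg (β M : ℝ) (x : E2) : 0 ≤ cutKernel β M x :=
  Set.indicator_nonneg (fun _ _ => by positivity) _

lemma integrable_cutKernel {β : ℝ} (hβ2 : β < 2) (M : ℝ) : Integrable (cutKernel β M) :=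
  (integrable_indicator_iff measurableSet_ball).2 (integrableOn_kernel hβ2 _)

lemma cutKernel_eq {β M : ℝ} {y z : E2} (hy : y ∈ Metric.ball (0 : E2) M)
    (hz : z ∈ Metric.ball (0 : E2) M) : cutKernel β M (y - z) = ‖y - z‖ ^ (-β) := by
  apply Set.indicator_of_mem
  simp only [mem_ball_zero_iff] at *
  linarith [norm_sub_le y z]

/-- Dominated convergence in the rescaled double integral, first in `z`, then in `y`. -/
lemma tendsto_Psi {β t₁ t₂ s : ℝ} (hβ2 : β < 2) (h₁ : s ≤ t₁) (h₂ : s ≤ t₂) :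
    Filter.Tendsto (fun R : ℝ => Psi β t₁ t₂ R s) Filter.atTop
      (nhds (∫ y : E2, ∫ z : E2, (Metric.ball (0 : E2) 1).indicator (fun _ => t₁ - s) y *
        (Metric.ball (0 : E2) 1).indicator (fun _ => t₂ - s) z * ‖y - z‖ ^ (-β))) := by
  have hT₁ : 0 ≤ t₁ - s := sub_nonneg.2 h₁
  have hT₂ : 0 ≤ t₂ - s := sub_nonneg.2 h₂
  set M : ℝ := 1 + (t₁ - s) + (t₂ - s) with hM
  set k := cutKernel β M with hk
  have hki : Integrable k := integrable_cutKernel hβ2 M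
  set χ : E2 → ℝ := (Metric.ball (0 : E2) M).indicator fun _ => (t₁ - s) * (t₂ - s) with hχ
  have hχ0 : ∀ y, 0 ≤ χ y := fun y => Set.indicator_nonneg (fun _ _ => by positivity) _
  have hχi : Integrable χ := by
    rw [hχ, integrable_indicator_iff measurableSet_ball]
    exact integrableOn_const (measure_ball_lt_top.ne)
  have hki' : ∀ y, Integrable fun z => k (y - z) := fun y => hki.comp_sub_left y
  have hkv : ∀ y, ∫ z, k (y - z) = ∫ z, k z := fun y => integral_sub_left_eq_self k volume y
  -- `χ y * k (y - z)` dominates the rescaled integrand for all `R ≥ 1`.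
  have hbound : ∀ R : ℝ, 1 ≤ R → ∀ y z : E2,
      ‖phi t₁ R s (R • y) * phi t₂ R s (R • z) * ‖y - z‖ ^ (-β)‖ ≤ χ y * k (y - z) := by
    intro R hR y z
    have hrhs : 0 ≤ χ y * k (y - z) := mul_nonneg (hχ0 y) (cutKernel_nonneg _ _ _)
    by_cases hy : y ∈ Metric.ball (0 : E2) M
    swap
    · rw [phi_scaled_eq_zero h₁ hR (by linarith) hy]; simpa using hrhs
    by_cases hz : z ∈ Metric.ball (0 : E2) M
    swap
    · rw [phi_scaled_eq_zero h₂ hR (by linarith) hz]; simpa using hrhs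
    have p1 := phi_nonneg t₁ R s (R • y)
    have p2 := phi_nonneg t₂ R s (R • z)
    rw [Real.norm_of_nonneg (by positivity), hk, cutKernel_eq hy hz, hχ, Set.indicator_of_mem hy]
    gcongr
    · exact phi_le h₁ _ _
    · exact phi_le h₂ _ _
  have hmeas : ∀ R : ℝ, StronglyMeasurable (fun p : E2 × E2 =>
      phi t₁ R s (R • p.1) * phi t₂ R s (R • p.2) * ‖p.1 - p.2‖ ^ (-β)) := by
    intro R
    have m1 := measurable_phi t₁ R s
    have m2 := measurable_phi t₂ R s
    exact Measurable.stronglyMeasurable (by fun_prop)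
  have hsph : ∀ᵐ y : E2, ‖y‖ ≠ 1 := by
    have := Measure.addHaar_sphere (volume : Measure E2) 0 1
    rw [measure_eq_zero_iff_ae_notMem] at this
    simpa using this
  have key : Filter.Tendsto (fun R : ℝ =>
      ∫ y : E2, ∫ z : E2, phi t₁ R s (R • y) * phi t₂ R s (R • z) * ‖y - z‖ ^ (-β)) Filter.atTop
      (nhds (∫ y : E2, ∫ z : E2, (Metric.ball (0 : E2) 1).indicator (fun _ => t₁ - s) y *
        (Metric.ball (0 : E2) 1).indicator (fun _ => t₂ - s) z * ‖y - z‖ ^ (-β))) := by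
    refine tendsto_integral_filter_of_dominated_convergence (fun y => χ y * ∫ z, k z) ?_ ?_ ?_ ?_
    · exact .of_forall fun R => (hmeas R).integral_prod_right.aestronglyMeasurable
    · filter_upwards [Filter.eventually_ge_atTop 1] with R hR
      refine .of_forall fun y => ?_
      rw [← hkv y, ← integral_const_mul]
      exact norm_integral_le_of_norm_le ((hki' y).const_mul _) (.of_forall (hbound R hR y))
    · exact hχi.mul_const _
    · filter_upwards [hsph] with y hy
      refine tendsto_integral_filter_of_dominated_convergence (fun z => χ y * k (y - z)) ?_ ?_ ?_ ?_
      · exact .of_forall fun R =>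
          ((hmeas R).comp_measurable measurable_prodMk_left).aestronglyMeasurable
      · filter_upwards [Filter.eventually_ge_atTop 1] with R hR
        exact .of_forall (hbound R hR y)
      · exact (hki' y).const_mul _
      · filter_upwards [hsph] with z hz
        exact ((tendsto_phi_scaled h₁ hy).mul (tendsto_phi_scaled h₂ hz)).mul_const _
  refine key.congr' ?_
  filter_upwards [Filter.eventually_gt_atTop 0] with R hR
  exact (Psi_eq_scaled β t₁ t₂ s hR).symm

/-! ### Fourier transform of the disk -/

/-- The Fourier transform of the indicator of the open unit disk; it is real by symmetry. -/
def diskFT (ξ : E2) : ℝ := ∫ x in Metric.ball (0 : E2) 1, Real.cos (inner ℝ x ξ)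

/-- Integration of a plane wave in the first coordinate over the vertical chords of the disk. -/
lemma integral_slices (r : ℝ) :
    ∫ x in Metric.ball (0 : E2) 1, Real.cos (r * x 0) =
      ∫ a in (-1 : ℝ)..1, 2 * √(1 - a ^ 2) * Real.cos (r * a) := by
  set f : ℝ × ℝ → ℝ := {p : ℝ × ℝ | p.2 ^ 2 < 1 - p.1 ^ 2}.indicator fun p => Real.cos (r * p.1)
    with hf
  have hS : MeasurableSet {p : ℝ × ℝ | p.2 ^ 2 < 1 - p.1 ^ 2} :=
    measurableSet_lt (by fun_prop) (by fun_prop)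
  have hmp : MeasurePreserving (fun x : E2 => (x 0, x 1)) volume volume :=
    (volume_preserving_finTwoArrow ℝ).comp (PiLp.volume_preserving_ofLp (Fin 2))
  have hemb : MeasurableEmbedding (fun x : E2 => (x 0, x 1)) :=
    (MeasurableEquiv.finTwoArrow (α := ℝ)).measurableEmbedding.comp
      (MeasurableEquiv.toLp 2 (Fin 2 → ℝ)).symm.measurableEmbedding
  have hball : (fun x : E2 => (x 0, x 1)) ⁻¹' {p : ℝ × ℝ | p.2 ^ 2 < 1 - p.1 ^ 2} =
      Metric.ball (0 : E2) 1 := by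
    ext x
    simp only [Set.mem_preimage, Set.mem_ofPred_eq, mem_ball_zero_iff, EuclideanSpace.norm_eq,
      Fin.sum_univ_two, Real.norm_eq_abs, sq_abs]
    rw [Real.sqrt_lt' one_pos]
    constructor <;> intro h <;> linarith
  have hfc : ∀ x : E2, f (x 0, x 1) =
      (Metric.ball (0 : E2) 1).indicator (fun x : E2 => Real.cos (r * x 0)) x := by
    intro x
    rw [← hball]
    rfl
  have hint : Integrable f := by
    rw [← hmp.integrable_comp_emb hemb]
    have : f ∘ (fun x : E2 => (x 0, x 1)) =
      (Metric.ball (0 : E2) 1).indicator (fun x : E2 => Real.cos (r * x 0)) := funext hfc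
    rw [this, integrable_indicator_iff measurableSet_ball]
    refine Measure.integrableOn_of_bounded (M := 1) measure_ball_lt_top.ne
      (by fun_prop) (.of_forall fun x => ?_)
    simpa using Real.abs_cos_le_one _
  rw [← integral_indicator measurableSet_ball]
  simp_rw [← hfc]
  rw [hmp.integral_comp hemb f, Measure.volume_eq_prod, integral_prod _ hint]
  have hin : ∀ a : ℝ, ∫ b, f (a, b) = 2 * √(1 - a ^ 2) * Real.cos (r * a) := by
    intro a
    have : (fun b => f (a, b)) =
        (Set.Ioo (-√(1 - a ^ 2)) (√(1 - a ^ 2))).indicator fun _ => Real.cos (r * a) := by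
      ext b
      simp only [hf, Set.indicator, Set.mem_ofPred_eq, Set.mem_Ioo, Real.sq_lt]
    rw [this, integral_indicator measurableSet_Ioo]
    simp [Measure.real]
    left
    ring
  simp_rw [hin]
  rw [intervalIntegral.integral_of_le (by norm_num), setIntegral_eq_integral_of_forall_compl_eq_zero]
  intro a ha
  have : 1 - a ^ 2 ≤ 0 := by
    simp only [Set.mem_Ioc, not_and_or, not_lt, not_le] at ha
    rcases ha with h | h <;> nlinarith
  simp [Real.sqrt_eq_zero_of_nonpos this]

/-- The substitution `a = cos θ`. -/
lemma integral_slices_eq (r : ℝ) :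
    ∫ a in (-1 : ℝ)..1, 2 * √(1 - a ^ 2) * Real.cos (r * a) =
      2 * ∫ θ in (0 : ℝ)..π, Real.sin θ ^ 2 * Real.cos (r * Real.cos θ) := by
  have h := intervalIntegral.integral_comp_mul_deriv (a := 0) (b := π) (f := Real.cos)
    (f' := fun θ => -Real.sin θ) (g := fun a : ℝ => 2 * √(1 - a ^ 2) * Real.cos (r * a))
    (fun θ _ => Real.hasDerivAt_cos θ) (by fun_prop) (by fun_prop)
  rw [Real.cos_zero, Real.cos_pi] at h
  rw [intervalIntegral.integral_symm, ← h, ← intervalIntegral.integral_const_mul, ← intervalIntegral.integral_neg]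
  refine intervalIntegral.integral_congr fun θ hθ => ?_
  rw [Set.uIcc_of_le Real.pi_pos.le] at hθ
  have hs : 0 ≤ Real.sin θ := Real.sin_nonneg_of_mem_Icc hθ
  simp only [Function.comp]
  rw [← Real.sin_sq, Real.sqrt_sq hs]
  ring

lemma diskFT_eq {ξ : E2} (hξ : ξ ≠ 0) : diskFT ξ = 2 * π * J1 ‖ξ‖ / ‖ξ‖ := by
  -- A reflection carries `ξ` to `‖ξ‖ e₀` and preserves the disk.
  set w : E2 := EuclideanSpace.single 0 ‖ξ‖ with hw
  have hnorm : ‖ξ‖ = ‖w‖ := by simp [hw]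
  set L : E2 ≃ₗᵢ[ℝ] E2 := Submodule.reflection (Submodule.span ℝ {ξ - w})ᗮ with hL
  have hLξ : L ξ = w := Submodule.reflection_sub hnorm
  have hpre : L ⁻¹' Metric.ball (0 : E2) 1 = Metric.ball (0 : E2) 1 := by
    ext x; simp
  have h1 : diskFT ξ = ∫ x in Metric.ball (0 : E2) 1, Real.cos (‖ξ‖ * x 0) := by
    rw [← L.measurePreserving.setIntegral_preimage_emb L.toHomeomorph.measurableEmbedding, hpre]
    refine setIntegral_congr_fun measurableSet_ball fun x _ => ?_
    simp only
    rw [← L.inner_map_map x ξ, hLξ, hw, EuclideanSpace.inner_single_right]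
    simp
  rw [h1, integral_slices, integral_slices_eq, J1]
  have : ‖ξ‖ ≠ 0 := norm_ne_zero_iff.2 hξ
  field_simp

lemma measurable_diskFT : Measurable diskFT := by
  have h : StronglyMeasurable (fun p : E2 × E2 => Real.cos (inner ℝ p.2 p.1)) :=
    Continuous.stronglyMeasurable (by fun_prop)
  exact (h.integral_prod_right (ν := volume.restrict (Metric.ball 0 1))).measurable

lemma integral_disk_sin (ξ : E2) : ∫ x in Metric.ball (0 : E2) 1, Real.sin (inner ℝ x ξ) = 0 := by
  have h := (Measure.measurePreserving_neg (volume : Measure E2)).setIntegral_preimage_emb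
    (MeasurableEquiv.neg E2).measurableEmbedding (fun x => Real.sin (inner ℝ x ξ))
    (Metric.ball (0 : E2) 1)
  have hpre : Neg.neg ⁻¹' Metric.ball (0 : E2) 1 = Metric.ball (0 : E2) 1 := by
    ext x; simp
  rw [hpre] at h
  simp only [inner_neg_left, Real.sin_neg, integral_neg] at h
  linarith

/-- Gaussian as a superposition of cosines. -/
lemma gaussian_eq {u : ℝ} (hu : 0 < u) (w : E2) :
    Integrable (fun ξ : E2 => Real.cos (inner ℝ w ξ) * Real.exp (-(‖ξ‖ ^ 2 / (4 * u)))) ∧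
    Real.exp (-(u * ‖w‖ ^ 2)) =
      (4 * π * u)⁻¹ * ∫ ξ : E2, Real.cos (inner ℝ w ξ) * Real.exp (-(‖ξ‖ ^ 2 / (4 * u))) := by
  have hb : 0 < ((1 / (4 * u) : ℝ) : ℂ).re := by
    rw [Complex.ofReal_re]; positivity
  have h := GaussianFourier.integral_cexp_neg_mul_sq_norm_add hb Complex.I w
  have hi := GaussianFourier.integrable_cexp_neg_mul_sq_norm_add hb Complex.I w
  have hre : ∀ ξ : E2, Real.cos (inner ℝ w ξ) * Real.exp (-(‖ξ‖ ^ 2 / (4 * u))) =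
      (Complex.exp (-((1 / (4 * u) : ℝ) : ℂ) * (‖ξ‖:ℂ) ^ 2 +
        Complex.I * ((inner ℝ w ξ : ℝ) : ℂ))).re := by
    intro ξ
    rw [Complex.exp_re, mul_comm]
    congr 2
    · simp [← Complex.ofReal_pow]; ring
    · simp [← Complex.ofReal_pow]
  refine ⟨by simp_rw [hre]; exact hi.re, ?_⟩
  have hrhs : (π / ((1 / (4 * u) : ℝ) : ℂ)) ^ (Module.finrank ℝ E2 / 2 : ℂ) *
      Complex.exp (Complex.I ^ 2 * (‖w‖ : ℂ) ^ 2 / (4 * ((1 / (4 * u) : ℝ) : ℂ))) =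
      ((4 * π * u * Real.exp (-(u * ‖w‖ ^ 2)) : ℝ) : ℂ) := by
    have hu' : (u : ℂ) ≠ 0 := by exact_mod_cast hu.ne'
    simp only [finrank_euclideanSpace, Fintype.card_fin, Nat.cast_ofNat]
    rw [div_self (two_ne_zero), Complex.cpow_one]
    push_cast
    rw [Complex.I_sq]
    congr 1
    · field_simp
    · congr 1; field_simp
  rw [hrhs] at h
  have h' := congrArg Complex.re h
  rw [Complex.ofReal_re] at h'
  have h2 : ∫ ξ : E2, Real.cos (inner ℝ w ξ) * Real.exp (-(‖ξ‖ ^ 2 / (4 * u))) =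
      4 * π * u * Real.exp (-(u * ‖w‖ ^ 2)) := by
    rw [← h']
    simp_rw [hre]
    exact integral_re hi
  rw [h2]
  field_simp

/-! ### Riesz energy of the disk -/

/-- Lebesgue measure on the open unit disk. -/
abbrev diskMeasure : Measure E2 := volume.restrict (Metric.ball (0 : E2) 1)

instance : IsFiniteMeasure diskMeasure := ⟨by simp [diskMeasure]⟩

lemma integral_disk_prod_cos (ξ : E2) :
    ∫ p, Real.cos (inner ℝ (p.1 - p.2) ξ) ∂(diskMeasure.prod diskMeasure) = diskFT ξ ^ 2 := by
  have hc : ∀ p : E2 × E2, Real.cos (inner ℝ (p.1 - p.2) ξ) =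
      Real.cos (inner ℝ p.1 ξ) * Real.cos (inner ℝ p.2 ξ) +
        Real.sin (inner ℝ p.1 ξ) * Real.sin (inner ℝ p.2 ξ) := by
    intro p
    rw [inner_sub_left, Real.cos_sub]
  have i1 : Integrable (fun x : E2 => Real.cos (inner ℝ x ξ)) diskMeasure :=
    Integrable.of_bound (Continuous.aestronglyMeasurable (by fun_prop)) 1
      (.of_forall fun x => by simpa using Real.abs_cos_le_one _)
  have i2 : Integrable (fun x : E2 => Real.sin (inner ℝ x ξ)) diskMeasure :=
    Integrable.of_bound (Continuous.aestronglyMeasurable (by fun_prop)) 1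
      (.of_forall fun x => by simpa using Real.abs_sin_le_one _)
  simp_rw [hc]
  rw [integral_add (i1.mul_prod i1) (i2.mul_prod i2),
    integral_prod_mul (fun x : E2 => Real.cos (inner ℝ x ξ)) (fun x : E2 => Real.cos (inner ℝ x ξ)),
    integral_prod_mul (fun x : E2 => Real.sin (inner ℝ x ξ)) (fun x : E2 => Real.sin (inner ℝ x ξ)),
    integral_disk_sin]
  simp [diskFT, sq]

/-- Plancherel for the disk against a Gaussian. -/
lemma lintegral_gaussian_disk {u : ℝ} (hu : 0 < u) :
    ∫⁻ p, ENNReal.ofReal (Real.exp (-(u * ‖p.1 - p.2‖ ^ 2))) ∂(diskMeasure.prod diskMeasure) =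
      ∫⁻ ξ : E2, ENNReal.ofReal
        ((4 * π * u)⁻¹ * (diskFT ξ ^ 2 * Real.exp (-(‖ξ‖ ^ 2 / (4 * u))))) := by
  set μ := diskMeasure.prod diskMeasure with hμ
  have hg : Integrable (fun ξ : E2 => Real.exp (-(‖ξ‖ ^ 2 / (4 * u)))) := by
    simpa using (gaussian_eq hu (0 : E2)).1
  have hjoint : Integrable (fun q : (E2 × E2) × E2 =>
      Real.cos (inner ℝ (q.1.1 - q.1.2) q.2) * Real.exp (-(‖q.2‖ ^ 2 / (4 * u))))
      (μ.prod volume) := by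
    refine (hg.comp_snd μ).mono' (Continuous.aestronglyMeasurable (by fun_prop))
      (.of_forall fun q => ?_)
    rw [norm_mul, Real.norm_of_nonneg (Real.exp_pos _).le]
    exact mul_le_of_le_one_left (Real.exp_pos _).le (Real.abs_cos_le_one _)
  have hsl : ∀ ξ : E2, ∫ p, Real.cos (inner ℝ (p.1 - p.2) ξ) * Real.exp (-(‖ξ‖ ^ 2 / (4 * u))) ∂μ =
      diskFT ξ ^ 2 * Real.exp (-(‖ξ‖ ^ 2 / (4 * u))) := by
    intro ξ
    rw [integral_mul_const, integral_disk_prod_cos]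
  have hFi : Integrable (fun ξ : E2 => diskFT ξ ^ 2 * Real.exp (-(‖ξ‖ ^ 2 / (4 * u)))) := by
    simpa only [hsl] using hjoint.integral_prod_right
  have hE : Integrable (fun p : E2 × E2 => Real.exp (-(u * ‖p.1 - p.2‖ ^ 2))) μ := by
    refine Integrable.of_bound (Continuous.aestronglyMeasurable (by fun_prop)) 1
      (.of_forall fun p => ?_)
    rw [Real.norm_of_nonneg (Real.exp_pos _).le, Real.exp_le_one_iff]
    have : 0 ≤ u * ‖p.1 - p.2‖ ^ 2 := by positivity
    linarith
  rw [← ofReal_integral_eq_lintegral_ofReal hE (.of_forall fun _ => (Real.exp_pos _).le),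
    ← ofReal_integral_eq_lintegral_ofReal (hFi.const_mul _) (.of_forall fun _ => by positivity)]
  congr 1
  simp_rw [fun w => (gaussian_eq hu w).2]
  rw [integral_const_mul, integral_const_mul, integral_integral_swap hjoint]
  simp_rw [hsl]

lemma ofReal_gamma_integral {a r : ℝ} (ha : 0 < a) (hr : 0 < r) :
    ∫⁻ u in Set.Ioi (0 : ℝ), ENNReal.ofReal (u ^ (a - 1) * Real.exp (-(r * u))) =
      ENNReal.ofReal ((1 / r) ^ a * Real.Gamma a) := by
  have hv := Real.integral_rpow_mul_exp_neg_mul_Ioi ha hr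
  have hpos : 0 < (1 / r) ^ a * Real.Gamma a :=
    mul_pos (Real.rpow_pos_of_pos (by positivity) _) (Real.Gamma_pos_of_pos ha)
  -- The integral is nonzero, hence not a junk value: the integrand is integrable.
  have hi : Integrable (fun u : ℝ => u ^ (a - 1) * Real.exp (-(r * u)))
      (volume.restrict (Set.Ioi 0)) := by
    by_contra h
    rw [integral_undef h] at hv
    exact hpos.ne hv
  rw [← hv, ofReal_integral_eq_lintegral_ofReal hi]
  filter_upwards [ae_restrict_mem measurableSet_Ioi] with u hu
  exact mul_nonneg (Real.rpow_nonneg (le_of_lt hu) _) (Real.exp_pos _).le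

/-- The inverse-Gamma integral, from the Gamma integral by the substitution `u ↦ u⁻¹`. -/
lemma ofReal_inv_gamma_integral {a r : ℝ} (ha : 0 < a) (hr : 0 < r) :
    ∫⁻ u in Set.Ioi (0 : ℝ), ENNReal.ofReal (u ^ (-a - 1) * Real.exp (-(r / u))) =
      ENNReal.ofReal ((1 / r) ^ a * Real.Gamma a) := by
  have hv := Real.integral_rpow_mul_exp_neg_mul_Ioi ha hr
  rw [← integral_comp_rpow_Ioi (fun u : ℝ => u ^ (a - 1) * Real.exp (-(r * u)))
    (p := -1) (by norm_num)] at hv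
  have hcongr : ∀ u ∈ Set.Ioi (0 : ℝ), (|(-1 : ℝ)| * u ^ ((-1 : ℝ) - 1)) •
      ((u ^ (-1 : ℝ)) ^ (a - 1) * Real.exp (-(r * u ^ (-1 : ℝ)))) =
      u ^ (-a - 1) * Real.exp (-(r / u)) := by
    intro u hu
    have hu : 0 < u := hu
    rw [← Real.rpow_mul hu.le, smul_eq_mul, abs_neg, abs_one, one_mul, ← mul_assoc,
      ← Real.rpow_add hu, Real.rpow_neg_one, div_eq_mul_inv]
    congr 2
    ring
  rw [setIntegral_congr_fun measurableSet_Ioi hcongr] at hv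
  have hpos : 0 < (1 / r) ^ a * Real.Gamma a :=
    mul_pos (Real.rpow_pos_of_pos (by positivity) _) (Real.Gamma_pos_of_pos ha)
  have hi : Integrable (fun u : ℝ => u ^ (-a - 1) * Real.exp (-(r / u)))
      (volume.restrict (Set.Ioi 0)) := by
    by_contra h
    rw [integral_undef h] at hv
    exact hpos.ne hv
  rw [← hv, ofReal_integral_eq_lintegral_ofReal hi]
  filter_upwards [ae_restrict_mem measurableSet_Ioi] with u hu
  exact mul_nonneg (Real.rpow_nonneg (le_of_lt hu) _) (Real.exp_pos _).le

/-- Subordination: off the origin, the Riesz kernel is a mixture of Gaussians. -/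
lemma kernel_eq_superposition {β : ℝ} (hβ0 : 0 < β) {x : E2} (hx : x ≠ 0) :
    ENNReal.ofReal (‖x‖ ^ (-β)) = ∫⁻ u in Set.Ioi (0 : ℝ),
      ENNReal.ofReal (u ^ (β / 2 - 1) / Real.Gamma (β / 2)) *
        ENNReal.ofReal (Real.exp (-(u * ‖x‖ ^ 2))) := by
  have hn : 0 < ‖x‖ := norm_pos_iff.2 hx
  have hΓ : 0 < Real.Gamma (β / 2) := Real.Gamma_pos_of_pos (by positivity)
  have h := ofReal_gamma_integral (a := β / 2) (by positivity) (r := ‖x‖ ^ 2) (by positivity)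
  have hc : ∀ u ∈ Set.Ioi (0 : ℝ),
      ENNReal.ofReal (u ^ (β / 2 - 1) / Real.Gamma (β / 2)) *
        ENNReal.ofReal (Real.exp (-(u * ‖x‖ ^ 2))) =
      ENNReal.ofReal ((Real.Gamma (β / 2))⁻¹) *
        ENNReal.ofReal (u ^ (β / 2 - 1) * Real.exp (-(‖x‖ ^ 2 * u))) := by
    intro u hu
    have hu : 0 < u := hu
    rw [← ENNReal.ofReal_mul (by positivity), ← ENNReal.ofReal_mul (by positivity)]
    congr 1
    rw [mul_comm u]
    ring
  rw [setLIntegral_congr_fun measurableSet_Ioi hc, lintegral_const_mul _ (by fun_prop), h,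
    ← ENNReal.ofReal_mul (by positivity)]
  congr 1
  rw [one_div, Real.inv_rpow (by positivity), ← Real.rpow_natCast ‖x‖ 2, ← Real.rpow_mul hn.le,
    Real.rpow_neg hn.le]
  push_cast
  rw [mul_div_cancel₀ β (two_ne_zero)]
  field_simp

/-- Integrating out the Gaussian parameter produces the weight `c_β ‖ξ‖ ^ (β - 2)`, which combines
with `diskFT ξ ^ 2 = 4π² J₁(‖ξ‖)² / ‖ξ‖²` into the integrand of `kappaBeta`. -/
lemma weight_integral {β : ℝ} (hβ0 : 0 < β) (hβ2 : β < 2) {ξ : E2} (hξ : ξ ≠ 0) :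
    ∫⁻ u in Set.Ioi (0 : ℝ), ENNReal.ofReal (u ^ (β / 2 - 1) / Real.Gamma (β / 2)) *
        ENNReal.ofReal ((4 * π * u)⁻¹ * (diskFT ξ ^ 2 * Real.exp (-(‖ξ‖ ^ 2 / (4 * u))))) =
      ENNReal.ofReal (4 * π ^ 2 * cBeta β * (‖ξ‖ ^ (β - 4) * J1 ‖ξ‖ ^ 2)) := by
  have hn : 0 < ‖ξ‖ := norm_pos_iff.2 hξ
  have hΓ : 0 < Real.Gamma (β / 2) := Real.Gamma_pos_of_pos (by positivity)
  have h := ofReal_inv_gamma_integral (a := 1 - β / 2) (by linarith) (r := ‖ξ‖ ^ 2 / 4)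
    (by positivity)
  have hc : ∀ u ∈ Set.Ioi (0 : ℝ),
      ENNReal.ofReal (u ^ (β / 2 - 1) / Real.Gamma (β / 2)) *
        ENNReal.ofReal ((4 * π * u)⁻¹ * (diskFT ξ ^ 2 * Real.exp (-(‖ξ‖ ^ 2 / (4 * u))))) =
      ENNReal.ofReal ((4 * π * Real.Gamma (β / 2))⁻¹ * diskFT ξ ^ 2) *
        ENNReal.ofReal (u ^ (-(1 - β / 2) - 1) * Real.exp (-(‖ξ‖ ^ 2 / 4 / u))) := by
    intro u hu
    have hu : 0 < u := hu
    rw [← ENNReal.ofReal_mul (by positivity), ← ENNReal.ofReal_mul (by positivity)]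
    congr 1
    rw [show -(1 - β / 2) - 1 = (β / 2 - 1) - 1 by ring, Real.rpow_sub_one hu.ne' (β / 2 - 1), div_div]
    generalize u ^ (β / 2 - 1) = A
    field_simp
  rw [setLIntegral_congr_fun measurableSet_Ioi hc, lintegral_const_mul _ (by fun_prop), h,
    ← ENNReal.ofReal_mul (by positivity)]
  congr 1
  have e1 : (1 / (‖ξ‖ ^ 2 / 4)) ^ (1 - β / 2) = 4 / 4 ^ (β / 2) * (‖ξ‖ ^ (β - 4) * ‖ξ‖ ^ 2) := by
    rw [one_div_div, Real.div_rpow (by norm_num) (by positivity),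
      Real.rpow_sub (by norm_num : (0:ℝ) < 4), Real.rpow_one, ← Real.rpow_natCast ‖ξ‖ 2,
      ← Real.rpow_mul hn.le, ← Real.rpow_add hn, div_eq_mul_inv _ (‖ξ‖ ^ _), ← Real.rpow_neg hn.le]
    congr 2
    push_cast
    ring
  rw [e1, diskFT_eq hξ, cBeta]
  have : (0:ℝ) < 4 ^ (β / 2) := by positivity
  field_simp
  ring

/-- The Riesz energy of the unit disk on the Fourier side. Both sides are integrals of nonnegative
functions, so every exchange of integrals is Tonelli and no finiteness is needed. -/
lemma energy_eq {β : ℝ} (hβ0 : 0 < β) (hβ2 : β < 2) :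
    ∫⁻ p, ENNReal.ofReal (‖p.1 - p.2‖ ^ (-β)) ∂(diskMeasure.prod diskMeasure) =
      ∫⁻ ξ : E2, ENNReal.ofReal (4 * π ^ 2 * cBeta β * (‖ξ‖ ^ (β - 4) * J1 ‖ξ‖ ^ 2)) := by
  have hm := measurable_diskFT
  have hdiag : ∀ᵐ p ∂(diskMeasure.prod diskMeasure), p.1 - p.2 ≠ 0 := by
    rw [Measure.ae_prod_iff_ae_ae (by measurability)]
    refine .of_forall fun y => ?_
    have : ∀ᵐ z ∂diskMeasure, z ≠ y := Measure.ae_ne _ _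
    filter_upwards [this] with z hz
    exact sub_ne_zero.2 hz.symm
  have hξ0 : ∀ᵐ ξ : E2, ξ ≠ 0 := Measure.ae_ne _ _
  calc ∫⁻ p, ENNReal.ofReal (‖p.1 - p.2‖ ^ (-β)) ∂(diskMeasure.prod diskMeasure)
      = ∫⁻ p, (∫⁻ u in Set.Ioi (0 : ℝ),
          ENNReal.ofReal (u ^ (β / 2 - 1) / Real.Gamma (β / 2)) *
            ENNReal.ofReal (Real.exp (-(u * ‖p.1 - p.2‖ ^ 2))))
              ∂(diskMeasure.prod diskMeasure) := by
        refine lintegral_congr_ae ?_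
        filter_upwards [hdiag] with p hp
        exact kernel_eq_superposition hβ0 hp
    _ = ∫⁻ u in Set.Ioi (0 : ℝ), ∫⁻ p,
          ENNReal.ofReal (u ^ (β / 2 - 1) / Real.Gamma (β / 2)) *
            ENNReal.ofReal (Real.exp (-(u * ‖p.1 - p.2‖ ^ 2)))
              ∂(diskMeasure.prod diskMeasure) :=
        lintegral_lintegral_swap (by
          unfold Function.uncurry
          exact Measurable.aemeasurable (by fun_prop))
    _ = ∫⁻ u in Set.Ioi (0 : ℝ), ∫⁻ ξ : E2,
          ENNReal.ofReal (u ^ (β / 2 - 1) / Real.Gamma (β / 2)) *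
            ENNReal.ofReal
              ((4 * π * u)⁻¹ * (diskFT ξ ^ 2 * Real.exp (-(‖ξ‖ ^ 2 / (4 * u))))) := by
        refine setLIntegral_congr_fun measurableSet_Ioi fun u hu => ?_
        rw [lintegral_const_mul _ (by fun_prop), lintegral_gaussian_disk hu,
          lintegral_const_mul _ (by fun_prop)]
    _ = ∫⁻ ξ : E2, ∫⁻ u in Set.Ioi (0 : ℝ),
          ENNReal.ofReal (u ^ (β / 2 - 1) / Real.Gamma (β / 2)) *
            ENNReal.ofReal
              ((4 * π * u)⁻¹ * (diskFT ξ ^ 2 * Real.exp (-(‖ξ‖ ^ 2 / (4 * u))))) :=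
        lintegral_lintegral_swap (by
          unfold Function.uncurry
          exact Measurable.aemeasurable (by fun_prop))
    _ = _ := by
        refine lintegral_congr_ae ?_
        filter_upwards [hξ0] with ξ hξ
        exact weight_integral hβ0 hβ2 hξ

lemma integrable_disk_kernel {β : ℝ} (hβ2 : β < 2) :
    Integrable (fun p : E2 × E2 => ‖p.1 - p.2‖ ^ (-β)) (diskMeasure.prod diskMeasure) := by
  have hk : Integrable (cutKernel β 1) := integrable_cutKernel hβ2 1
  rw [integrable_prod_iff (Measurable.aestronglyMeasurable (by fun_prop))]
  have hin : ∀ y ∈ Metric.ball (0 : E2) 1, ∀ z ∈ Metric.ball (0 : E2) 1,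
      cutKernel β 1 (y - z) = ‖y - z‖ ^ (-β) := fun y hy z hz => cutKernel_eq hy hz
  constructor
  · filter_upwards [ae_restrict_mem measurableSet_ball] with y hy
    refine (integrableOn_congr_fun (hin y hy) measurableSet_ball).1 ?_
    exact (hk.comp_sub_left y).integrableOn
  · refine Integrable.of_bound (StronglyMeasurable.aestronglyMeasurable
      (StronglyMeasurable.integral_prod_right'
        (f := fun p : E2 × E2 => ‖‖p.1 - p.2‖ ^ (-β)‖)
        (Measurable.stronglyMeasurable (by fun_prop)))) (∫ z, cutKernel β 1 z) ?_
    filter_upwards [ae_restrict_mem measurableSet_ball] with y hy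
    rw [Real.norm_of_nonneg (integral_nonneg fun _ => norm_nonneg _),
      ← integral_sub_left_eq_self (cutKernel β 1) volume y]
    calc ∫ z in Metric.ball (0 : E2) 1, ‖‖y - z‖ ^ (-β)‖
        = ∫ z in Metric.ball (0 : E2) 1, cutKernel β 1 (y - z) := by
          refine setIntegral_congr_fun measurableSet_ball fun z hz => ?_
          rw [hin y hy z hz, Real.norm_of_nonneg (by positivity)]
      _ ≤ _ := setIntegral_le_integral (hk.comp_sub_left y)
          (.of_forall fun _ => cutKernel_nonneg _ _ _)

/-- The limit integral is the Riesz energy of the disk, up to the factor `T₁ T₂`, and hence equals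
the Fourier-side constant. -/
lemma limit_eq {β : ℝ} (hβ0 : 0 < β) (hβ2 : β < 2) (T₁ T₂ : ℝ) :
    ∫ y : E2, ∫ z : E2, (Metric.ball (0 : E2) 1).indicator (fun _ => T₁) y *
        (Metric.ball (0 : E2) 1).indicator (fun _ => T₂) z * ‖y - z‖ ^ (-β) =
      4 * π ^ 2 * cBeta β * kappaBeta β * (T₁ * T₂) := by
  have h1 : ∀ y z : E2, (Metric.ball (0 : E2) 1).indicator (fun _ => T₁) y *
        (Metric.ball (0 : E2) 1).indicator (fun _ => T₂) z * ‖y - z‖ ^ (-β) =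
      (Metric.ball (0 : E2) 1).indicator (fun _ => T₁ * T₂) y *
        (Metric.ball (0 : E2) 1).indicator (fun z => ‖y - z‖ ^ (-β)) z := by
    intro y z
    by_cases hy : y ∈ Metric.ball (0 : E2) 1 <;> by_cases hz : z ∈ Metric.ball (0 : E2) 1 <;>
      simp [Set.indicator, hy, hz]
  have h2 : ∀ y : E2, (Metric.ball (0 : E2) 1).indicator (fun _ => T₁ * T₂) y *
        ∫ z in Metric.ball (0 : E2) 1, ‖y - z‖ ^ (-β) =
      (Metric.ball (0 : E2) 1).indicator
        (fun y => T₁ * T₂ * ∫ z in Metric.ball (0 : E2) 1, ‖y - z‖ ^ (-β)) y := by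
    intro y
    by_cases hy : y ∈ Metric.ball (0 : E2) 1 <;> simp [Set.indicator, hy]
  have hcβ : 0 ≤ cBeta β := by
    have a1 := Real.Gamma_pos_of_pos (s := β / 2) (by positivity)
    have a2 := Real.Gamma_pos_of_pos (s := 1 - β / 2) (by linarith)
    unfold cBeta
    positivity
  simp_rw [h1, integral_const_mul, integral_indicator measurableSet_ball, h2]
  rw [integral_indicator measurableSet_ball, integral_const_mul,
    ← integral_prod _ (integrable_disk_kernel hβ2),
    integral_eq_lintegral_of_nonneg_ae (.of_forall fun _ => by positivity)
      (integrable_disk_kernel hβ2).aestronglyMeasurable,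
    energy_eq hβ0 hβ2, ← integral_eq_lintegral_of_nonneg_ae, integral_const_mul, kappaBeta]
  · ring
  · exact .of_forall fun _ => by positivity
  · have : Measurable J1 := by
      have h : StronglyMeasurable (fun p : ℝ × ℝ =>
          Real.sin p.2 ^ 2 * Real.cos (p.1 * Real.cos p.2)) :=
        Continuous.stronglyMeasurable (by fun_prop)
      have h' := (h.integral_prod_right' (ν := volume.restrict (Set.Ioc 0 π))).measurable
      unfold J1
      simp_rw [intervalIntegral.integral_of_le Real.pi_pos.le]
      fun_prop
    exact Measurable.aestronglyMeasurable (by fun_prop)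

/-- For `β ∈ (0,2)`, `t₁, t₂ > 0` and `s ∈ [0, min(t₁,t₂)]`,
`Ψ_R(t₁,t₂;s) → 4π² c_β κ_β (t₁-s)(t₂-s)` as `R → ∞`. -/
theorem stmt_4 (β t₁ t₂ s : ℝ) (hβ0 : 0 < β) (hβ2 : β < 2) (ht₁ : 0 < t₁) (ht₂ : 0 < t₂)
    (hs : s ∈ Set.Icc 0 (min t₁ t₂)) :
    Filter.Tendsto (fun R : ℝ => Psi β t₁ t₂ R s) Filter.atTop
      (nhds (4 * π ^ 2 * cBeta β * kappaBeta β * ((t₁ - s) * (t₂ - s)))) := by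
  have h₁ : s ≤ t₁ := hs.2.trans (min_le_left _ _)
  have h₂ : s ≤ t₂ := hs.2.trans (min_le_right _ _)
  rw [← limit_eq hβ0 hβ2]
  exact tendsto_Psi hβ2 h₁ h₂
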